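/- arXiv:1203.5678 — 2 statements merged into one kernel-verified Lean document; each statement's English description precedes it below -/
import Mathlib

section
/- Let d be a partial metric on a nonempty set X whose associated metric space (X,e) is complete, let φ : [0,∞) → [0,∞) be right limit normal, and let T : X → X be (M;c;φ)-contractive, i.e., d(Tx,Ty) ≤ max{φ(M(x,y)), c(x,y)} for all x, y ∈ X. Then for each x ∈ X: the sequence ρ_n := d(Tⁿx, Tⁿ⁺¹x) is nonincreasing, hence converges to some γ(x) ≥ 0; moreover the sequence α_n := d(Tⁿx, Tⁿx) also converges to γ(x), with α_n ≥ γ(x) for all sufficiently large n. -/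
open Filter Topology

noncomputable section

/-- A partial metric on `X` (Matthews). -/
def IsPartialMetric {X : Type*} (d : X → X → ℝ) : Prop :=
  (∀ x y, 0 ≤ d x y) ∧
  (∀ x y, d x y = d y x) ∧
  (∀ x y, max (d x x) (d y y) ≤ d x y) ∧
  (∀ x y z, d x z ≤ d x y + d y z - d y y) ∧
  (∀ x y, d x y = d x x → d x y = d y y → x = y)

/-- The (standard) metric associated to a partial metric. -/
def assocE {X : Type*} (d : X → X → ℝ) (x y : X) : ℝ :=
  2 * d x y - d x x - d y y

/-- Completeness of the associated metric space `(X, e)`: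
every `e`-Cauchy sequence `e`-converges to some point. -/
def eComplete {X : Type*} (d : X → X → ℝ) : Prop :=
  ∀ u : ℕ → X,
    (∀ α : ℝ, 0 < α → ∃ p : ℕ, ∀ m n : ℕ, p ≤ m → p ≤ n → assocE d (u m) (u n) < α) →
    ∃ x : X, Tendsto (fun n => assocE d (u n) x) atTop (nhds 0)

/-- `M(x,y) = max{d(x,y), d(x,Tx), d(y,Ty), (1/2)(d(x,Ty)+d(Tx,y))}`. -/
def Mfun {X : Type*} (d : X → X → ℝ) (T : X → X) (x y : X) : ℝ :=
  max (max (d x y) (max (d x (T x)) (d y (T y)))) ((d x (T y) + d (T x) y) / 2)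

/-- A normal function `φ : [0,∞) → [0,∞)`. -/
def IsNormal (φ : ℝ → ℝ) : Prop :=
  (∀ t, 0 ≤ t → 0 ≤ φ t) ∧ φ 0 = 0 ∧ ∀ t, 0 < t → φ t < t

/-- `limsup_{t→s⁺} φ(t) = inf_{ε>0} sup {φ(t) : s ≤ t < s+ε}`. -/
def rightLimsup (φ : ℝ → ℝ) (s : ℝ) : ℝ :=
  sInf {y : ℝ | ∃ ε : ℝ, 0 < ε ∧ y = sSup (φ '' Set.Ico s (s + ε))}

/-- `limsup_{t→s} φ(t) = inf_{ε>0} sup {φ(t) : t ∈ [0,∞), s-ε < t < s+ε}`. -/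
def limsupAt (φ : ℝ → ℝ) (s : ℝ) : ℝ :=
  sInf {y : ℝ | ∃ ε : ℝ, 0 < ε ∧ y = sSup (φ '' (Set.Ioo (s - ε) (s + ε) ∩ Set.Ici 0))}

/-- A right limit normal function. -/
def IsRightLimitNormal (φ : ℝ → ℝ) : Prop :=
  IsNormal φ ∧ ∀ s : ℝ, 0 < s → rightLimsup φ s < s

/-- A limit normal function. -/
def IsLimitNormal (φ : ℝ → ℝ) : Prop :=
  IsNormal φ ∧ ∀ s : ℝ, 0 < s → limsupAt φ s < s

/-- `liminf_{t→∞} ψ(t) = sup_{α ≥ 0} inf {ψ(t) : t ≥ α}`, computed in `EReal`. -/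
def liminfAtInfty (ψ : ℝ → ℝ) : EReal :=
  ⨆ α : {a : ℝ // 0 ≤ a}, ⨅ t : {t : ℝ // (α : ℝ) ≤ t}, ((ψ t : ℝ) : EReal)

/-- `ψ` is semi-coercive: `liminf_{t→∞} ψ(t) > 0`. -/
def SemiCoercive (ψ : ℝ → ℝ) : Prop := 0 < liminfAtInfty ψ

/-!
Write `ρ n = d(Tⁿx, Tⁿ⁺¹x)` and `α n = d(Tⁿx, Tⁿx)`. The triangle inequality gives
`M(y, Ty) = max{d(y, Ty), d(Ty, T²y)}`, so contractivity at `(Tⁿx, Tⁿ⁺¹x)` makes an increase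
`ρ n < ρ (n + 1)` impossible, and `ρ` decreases to a limit `γ`. Since `α ≤ ρ`, it remains to see
that `γ ≤ α n` eventually. Suppose `γ > 0`. For large `n`, right limit normality gives
`φ (ρ n) < γ`; if also `α n < γ`, then contractivity at `(Tⁿx, Tⁿx)` gives `α (n + 1) < γ`, and
then contractivity at `(Tⁿx, Tⁿ⁺¹x)` gives `ρ (n + 1) < γ`, which is absurd.
-/

/-- Matthews' axioms without separation (points with `d x y = d x x = d y y` may be distinct).
By symmetry the axiom `max (d x x) (d y y) ≤ d x y` is recorded in one variable only. -/
structure IsPartialPseudometric {X : Type*} (d : X → X → ℝ) : Prop where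
  nonneg : ∀ x y, 0 ≤ d x y
  symm : ∀ x y, d x y = d y x
  self_le : ∀ x y, d x x ≤ d x y
  triangle : ∀ x y z, d x z ≤ d x y + d y z - d y y

/-- `T` is `(M;c;φ)`-contractive, where `c(x,y) = max{d(x,x), d(y,y)}`. -/
def IsContractive {X : Type*} (d : X → X → ℝ) (φ : ℝ → ℝ) (T : X → X) : Prop :=
  ∀ x y, d (T x) (T y) ≤ max (φ (Mfun d T x y)) (max (d x x) (d y y))

theorem IsPartialMetric.isPartialPseudometric {X : Type*} {d : X → X → ℝ}
    (hd : IsPartialMetric d) : IsPartialPseudometric d :=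
  let ⟨nonneg, symm, max_self_le, triangle, _⟩ := hd
  ⟨nonneg, symm, fun x y => (le_max_left _ _).trans (max_self_le x y), triangle⟩

section ComparisonFunction

variable {φ : ℝ → ℝ} {s : ℝ}

/-- Excludes the junk value `sSup = 0` of an unbounded set in `rightLimsup`. -/
theorem IsNormal.bddAbove_image_Ico (hφ : IsNormal φ) (hs : 0 < s) (b : ℝ) :
    BddAbove (φ '' Set.Ico s b) := by
  refine ⟨b, ?_⟩
  rintro _ ⟨t, ⟨hst, htb⟩, rfl⟩
  exact ((hφ.2.2 t (hs.trans_le hst)).trans htb).le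

theorem IsRightLimitNormal.eventually_lt (hφ : IsRightLimitNormal φ) (hs : 0 < s) :
    ∀ᶠ t in 𝓝[≥] s, φ t < s := by
  obtain ⟨_, ⟨ε, hε, rfl⟩, hsup⟩ := exists_lt_of_csInf_lt
    (by exact ⟨_, 1, one_pos, rfl⟩) (hφ.2 s hs)
  filter_upwards [Ico_mem_nhdsGE (lt_add_of_pos_right s hε)] with t ht
  exact (le_csSup (hφ.1.bddAbove_image_Ico hs _) (Set.mem_image_of_mem φ ht)).trans_lt hsup

end ComparisonFunction

section Displacement

variable {X : Type*} {d : X → X → ℝ} {φ : ℝ → ℝ} {T : X → X}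

namespace IsPartialPseudometric

theorem self_le_right (hd : IsPartialPseudometric d) (x y : X) : d y y ≤ d x y :=
  hd.symm y x ▸ hd.self_le y x

theorem mfun_self (hd : IsPartialPseudometric d) (T : X → X) (x : X) :
    Mfun d T x x = d x (T x) := by
  rw [Mfun, max_self, max_eq_right (hd.self_le x (T x)), hd.symm (T x) x, add_self_div_two,
    max_self]

theorem mfun_map (hd : IsPartialPseudometric d) (T : X → X) (x : X) :
    Mfun d T x (T x) = max (d x (T x)) (d (T x) (T (T x))) := by
  have average_le : (d x (T (T x)) + d (T x) (T x)) / 2 ≤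
      max (d x (T x)) (d (T x) (T (T x))) := by
    linarith [hd.triangle x (T x) (T (T x)), le_max_left (d x (T x)) (d (T x) (T (T x))),
      le_max_right (d x (T x)) (d (T x) (T (T x)))]
  rw [Mfun, ← max_assoc, max_self, max_eq_left average_le]

end IsPartialPseudometric

namespace IsContractive

theorem self_map_le (hT : IsContractive d φ T) (hd : IsPartialPseudometric d) (x : X) :
    d (T x) (T x) ≤ max (φ (d x (T x))) (d x x) := by
  simpa only [hd.mfun_self, max_self] using hT x x

theorem displacement_map_le (hT : IsContractive d φ T) (hd : IsPartialPseudometric d)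
    (hφ : ∀ t, 0 < t → φ t < t) (x : X) : d (T x) (T (T x)) ≤ d x (T x) := by
  by_contra! hlt
  have hφ_lt : φ (d (T x) (T (T x))) < d (T x) (T (T x)) := hφ _ ((hd.nonneg _ _).trans_lt hlt)
  have hself_lt : max (d x x) (d (T x) (T x)) < d (T x) (T (T x)) :=
    (max_le (hd.self_le _ _) (hd.self_le_right _ _)).trans_lt hlt
  have hcontr := hT x (T x)
  rw [hd.mfun_map, max_eq_right hlt.le] at hcontr
  exact hcontr.not_gt (max_lt hφ_lt hself_lt)

theorem displacement_map_lt (hT : IsContractive d φ T) (hd : IsPartialPseudometric d)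
    (hφ : ∀ t, 0 < t → φ t < t) {x : X} {s : ℝ} (hφs : φ (d x (T x)) < s) (hself : d x x < s) :
    d (T x) (T (T x)) < s := by
  have hself_map : d (T x) (T x) < s := (hT.self_map_le hd x).trans_lt (max_lt hφs hself)
  have hcontr := hT x (T x)
  rw [hd.mfun_map, max_eq_left (hT.displacement_map_le hd hφ x)] at hcontr
  exact hcontr.trans_lt (max_lt hφs (max_lt hself hself_map))

theorem displacement_iterate_succ_le (hT : IsContractive d φ T) (hd : IsPartialPseudometric d)
    (hφ : ∀ t, 0 < t → φ t < t) (x : X) (n : ℕ) :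
    d (T^[n + 1] x) (T^[n + 2] x) ≤ d (T^[n] x) (T^[n + 1] x) := by
  simpa only [Function.iterate_succ_apply'] using hT.displacement_map_le hd hφ (T^[n] x)

theorem eventually_le_self_iterate (hT : IsContractive d φ T) (hd : IsPartialPseudometric d)
    (hφ : ∀ s, 0 < s → ∀ᶠ t in 𝓝[≥] s, φ t < s) {x : X} {γ : ℝ}
    (hge : ∀ n, γ ≤ d (T^[n] x) (T^[n + 1] x))
    (hlim : Tendsto (fun n => d (T^[n] x) (T^[n + 1] x)) atTop (𝓝 γ)) :
    ∀ᶠ n in atTop, γ ≤ d (T^[n] x) (T^[n] x) := by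
  rcases le_or_gt γ 0 with hγ | hγ
  · exact .of_forall fun n => hγ.trans (hd.nonneg _ _)
  have hlim_right : Tendsto (fun n => d (T^[n] x) (T^[n + 1] x)) atTop (𝓝[≥] γ) :=
    tendsto_nhdsWithin_iff.2 ⟨hlim, .of_forall hge⟩
  filter_upwards [hlim_right.eventually (hφ γ hγ)] with n hφn
  by_contra! hself
  have hnext := hge (n + 1)
  simp only [Function.iterate_succ_apply'] at hφn hnext
  exact hnext.not_gt <|
    hT.displacement_map_lt hd (fun s hs => (hφ s hs).self_of_nhdsWithin Set.self_mem_Ici) hφn hself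

end IsContractive

theorem picard_semiCauchy_general (hd : IsPartialPseudometric d)
    (hφ : ∀ s, 0 < s → ∀ᶠ t in 𝓝[≥] s, φ t < s) (hT : IsContractive d φ T) (x : X) :
    ∃ γ : ℝ, 0 ≤ γ ∧
      (∀ n : ℕ, d (T^[n + 1] x) (T^[n + 2] x) ≤ d (T^[n] x) (T^[n + 1] x)) ∧
      Tendsto (fun n => d (T^[n] x) (T^[n + 1] x)) atTop (𝓝 γ) ∧
      Tendsto (fun n => d (T^[n] x) (T^[n] x)) atTop (𝓝 γ) ∧
      ∃ k : ℕ, ∀ n : ℕ, k ≤ n → γ ≤ d (T^[n] x) (T^[n] x) := by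
  have hsucc := hT.displacement_iterate_succ_le hd
    (fun s hs => (hφ s hs).self_of_nhdsWithin Set.self_mem_Ici) x
  have hbdd : BddBelow (Set.range fun n => d (T^[n] x) (T^[n + 1] x)) :=
    ⟨0, Set.forall_mem_range.2 fun _ => hd.nonneg _ _⟩
  have hlim := tendsto_atTop_ciInf (antitone_nat_of_succ_le hsucc) hbdd
  have hself := hT.eventually_le_self_iterate hd hφ (ciInf_le hbdd) hlim
  exact ⟨_, le_ciInf fun _ => hd.nonneg _ _, hsucc, hlim,
    tendsto_of_tendsto_of_tendsto_of_le_of_le' tendsto_const_nhds hlim hself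
      (.of_forall fun _ => hd.self_le _ _),
    eventually_atTop.1 hself⟩

end Displacement

/-- for `(M;c;φ)`-contractive `T`, the sequence `ρ_n = d(Tⁿx, Tⁿ⁺¹x)` is
nonincreasing with limit `γ(x) ≥ 0`, and `α_n = d(Tⁿx, Tⁿx)` converges to the same `γ(x)`,
with `α_n ≥ γ(x)` for large `n`. -/
theorem picard_semiCauchy {X : Type*} [Nonempty X] (d : X → X → ℝ)
    (hd : IsPartialMetric d) (hcomp : eComplete d)
    (φ : ℝ → ℝ) (hφ : IsRightLimitNormal φ) (T : X → X)
    (hT : ∀ x y : X, d (T x) (T y) ≤ max (φ (Mfun d T x y)) (max (d x x) (d y y)))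
    (x : X) :
    ∃ γ : ℝ, 0 ≤ γ ∧
      (∀ n : ℕ, d (T^[n + 1] x) (T^[n + 2] x) ≤ d (T^[n] x) (T^[n + 1] x)) ∧
      Tendsto (fun n => d (T^[n] x) (T^[n + 1] x)) atTop (nhds γ) ∧
      Tendsto (fun n => d (T^[n] x) (T^[n] x)) atTop (nhds γ) ∧
      ∃ k : ℕ, ∀ n : ℕ, k ≤ n → γ ≤ d (T^[n] x) (T^[n] x) :=
  picard_semiCauchy_general hd.isPartialPseudometric (fun _ => hφ.eventually_lt) hT x
end
end

section
/- Let d be a partial metric on a nonempty set X whose associated metric space (X,e) is complete, let φ : [0,∞) → [0,∞) be limit normal with ψ(t) := t − φ(t) semi-coercive, and let T : X → X be (M;b;φ)-contractive, i.e., d(Tx,Ty) ≤ max{φ(M(x,y)), b(x,y)} for all x, y ∈ X. Then T has a unique fixed point: there exists exactly one z ∈ X with Tz = z. -/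
open Filter Topology

noncomputable section

/-!
Call `e(u, Tu)` the defect of `u`. A point whose displacement `d(u, Tu)` is close to its infimum `ρ`
has small defect: this is clear if `ρ = 0`, and otherwise `d(Tu, T²u) ≥ ρ` rules out the `φ`-branch
of the contraction inequality, so that the other branch forces `d(u,u) + d(Tu,Tu) ≥ 2ρ`. On the
other hand `M(u,v)` and `d(Tu,Tv)` differ from `d(u,v)` by at most the sum of the defects of `u` and
`v`, so the margin by which `φ` stays below the identity makes any two points of small defect
`e`-close. Hence a sequence minimizing the displacement is `e`-Cauchy; its limit attains the
infimum, so it has defect zero and is fixed.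
-/

lemma exists_seq_tendsto_iInf {ι α : Type*} [Nonempty ι] [ConditionallyCompleteLinearOrder α]
    [TopologicalSpace α] [OrderTopology α] [FirstCountableTopology α] {f : ι → α}
    (hf : BddBelow (Set.range f)) :
    ∃ u : ℕ → ι, Tendsto (fun n => f (u n)) atTop (𝓝 (⨅ i, f i)) := by
  obtain ⟨v, -, hv, hmem⟩ := exists_seq_tendsto_sInf (Set.range_nonempty f) hf
  choose u hu using hmem
  exact ⟨u, hv.congr fun n => (hu n).symm⟩

lemma exists_pos_forall_ge_le_of_locally {ψ : ℝ → ℝ} {a : ℝ}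
    (hloc : ∀ s, a ≤ s → ∃ δ > 0, ∀ᶠ t in 𝓝 s, δ ≤ ψ t)
    (htop : ∃ δ > 0, ∀ᶠ t in atTop, δ ≤ ψ t) :
    ∃ δ > 0, ∀ t, a ≤ t → δ ≤ ψ t := by
  obtain ⟨δ₁, hδ₁, hev⟩ := htop
  obtain ⟨c, hc⟩ := eventually_atTop.1 hev
  have hcompact : ∃ δ > 0, ∀ t ∈ Set.Icc a c, δ ≤ ψ t := by
    refine isCompact_Icc.induction_on (p := fun S => ∃ δ > 0, ∀ t ∈ S, δ ≤ ψ t)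
      ⟨1, one_pos, by simp⟩ ?mono ?union ?nhds
    case mono =>
      rintro S S' hSS' ⟨δ, hδ, h⟩
      exact ⟨δ, hδ, fun t ht => h t (hSS' ht)⟩
    case union =>
      rintro S S' ⟨δ, hδ, h⟩ ⟨δ', hδ', h'⟩
      refine ⟨min δ δ', lt_min hδ hδ', ?_⟩
      rintro t (ht | ht)
      exacts [(min_le_left _ _).trans (h t ht), (min_le_right _ _).trans (h' t ht)]
    case nhds =>
      intro s hs
      obtain ⟨δ, hδ, h⟩ := hloc s hs.1
      exact ⟨{t | δ ≤ ψ t}, mem_nhdsWithin_of_mem_nhds h, δ, hδ, fun _ ht => ht⟩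
  obtain ⟨δ₀, hδ₀, hIcc⟩ := hcompact
  refine ⟨min δ₀ δ₁, lt_min hδ₀ hδ₁, fun t hat => ?_⟩
  rcases le_total t c with htc | hct
  · exact (min_le_left _ _).trans (hIcc t ⟨hat, htc⟩)
  · exact (min_le_right _ _).trans (hc t hct)

lemma SemiCoercive.exists_pos_eventually_le {ψ : ℝ → ℝ} (hψ : SemiCoercive ψ) :
    ∃ δ > 0, ∀ᶠ t in atTop, δ ≤ ψ t := by
  obtain ⟨α, hα⟩ := lt_iSup_iff.1 hψ
  obtain ⟨δ, hδ, hδα⟩ := EReal.lt_iff_exists_real_btwn.1 hα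
  refine ⟨δ, EReal.coe_pos.1 hδ, ?_⟩
  filter_upwards [eventually_ge_atTop (α : ℝ)] with t ht
  exact EReal.coe_le_coe_iff.1
    (hδα.le.trans (iInf_le _ (⟨t, ht⟩ : {t : ℝ // (α : ℝ) ≤ t})))

lemma IsNormal.le_self {φ : ℝ → ℝ} (hφ : IsNormal φ) {t : ℝ} (ht : 0 ≤ t) : φ t ≤ t := by
  rcases ht.eq_or_lt with rfl | hpos
  exacts [hφ.2.1.le, (hφ.2.2 t hpos).le]

lemma IsLimitNormal.exists_pos_eventually_le_sub {φ : ℝ → ℝ} (hφ : IsLimitNormal φ) {s : ℝ}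
    (hs : 0 < s) : ∃ δ > 0, ∀ᶠ t in 𝓝 s, δ ≤ t - φ t := by
  have hlimsup := hφ.2 s hs
  rw [limsupAt] at hlimsup
  obtain ⟨_, ⟨ε, hε, rfl⟩, hcs⟩ :=
    exists_lt_of_csInf_lt (by exact ⟨_, 1, one_pos, rfl⟩) hlimsup
  set c := sSup (φ '' (Set.Ioo (s - ε) (s + ε) ∩ Set.Ici 0))
  have hbdd : BddAbove (φ '' (Set.Ioo (s - ε) (s + ε) ∩ Set.Ici 0)) := by
    refine ⟨s + ε, ?_⟩
    rintro _ ⟨t, ⟨ht, ht0⟩, rfl⟩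
    exact (hφ.1.le_self ht0).trans ht.2.le
  refine ⟨(s - c) / 2, by linarith, ?_⟩
  filter_upwards [Ioo_mem_nhds (sub_lt_self s hε) (lt_add_of_pos_right s hε), Ioi_mem_nhds hs,
    Ioi_mem_nhds (show (s + c) / 2 < s by linarith)] with t ht (ht0 : 0 < t) (hct : (s + c) / 2 < t)
  have : φ t ≤ c := le_csSup hbdd ⟨t, ⟨ht, ht0.le⟩, rfl⟩
  linarith

/-- On every half-line `[s, ∞)` with `s > 0`, the function `φ` stays below the identity by a
positive margin: the form in which limit normality and semi-coercivity enter the argument. -/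
def HasUniformGap (φ : ℝ → ℝ) : Prop :=
  ∀ s, 0 < s → ∃ δ > 0, ∀ t, s ≤ t → δ ≤ t - φ t

lemma IsLimitNormal.hasUniformGap {φ : ℝ → ℝ} (hφ : IsLimitNormal φ)
    (hψ : SemiCoercive (fun t => t - φ t)) : HasUniformGap φ := fun _ hs =>
  exists_pos_forall_ge_le_of_locally
    (fun _ hst => hφ.exists_pos_eventually_le_sub (hs.trans_le hst)) hψ.exists_pos_eventually_le

lemma HasUniformGap.lt_self {φ : ℝ → ℝ} (hφ : HasUniformGap φ) {t : ℝ} (ht : 0 < t) :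
    φ t < t := by
  obtain ⟨δ, hδ, h⟩ := hφ t ht
  linarith [h t le_rfl]

section PartialMetric

variable {X : Type*} {d : X → X → ℝ}

namespace IsPartialMetric

lemma nonneg (hd : IsPartialMetric d) (x y : X) : 0 ≤ d x y := hd.1 x y

lemma symm (hd : IsPartialMetric d) (x y : X) : d x y = d y x := hd.2.1 x y

lemma self_le_left (hd : IsPartialMetric d) (x y : X) : d x x ≤ d x y :=
  (le_max_left _ _).trans (hd.2.2.1 x y)

lemma self_le_right (hd : IsPartialMetric d) (x y : X) : d y y ≤ d x y :=
  (le_max_right _ _).trans (hd.2.2.1 x y)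

lemma triangle (hd : IsPartialMetric d) (x y z : X) : d x z ≤ d x y + d y z - d y y :=
  hd.2.2.2.1 x y z

lemma assocE_comm (hd : IsPartialMetric d) (x y : X) : assocE d x y = assocE d y x := by
  simp only [assocE, hd.symm x y]
  ring

lemma assocE_nonneg (hd : IsPartialMetric d) (x y : X) : 0 ≤ assocE d x y := by
  unfold assocE
  linarith [hd.self_le_left x y, hd.self_le_right x y]

lemma eq_of_assocE_nonpos (hd : IsPartialMetric d) {x y : X} (h : assocE d x y ≤ 0) : x = y := by
  unfold assocE at h
  have hx := hd.self_le_left x y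
  have hy := hd.self_le_right x y
  exact hd.2.2.2.2 x y (by linarith) (by linarith)

lemma le_self_add_assocE (hd : IsPartialMetric d) (x y : X) : d x y ≤ d x x + assocE d x y := by
  unfold assocE
  linarith [hd.self_le_right x y]

lemma le_add_assocE_left (hd : IsPartialMetric d) (x x' y : X) :
    d x y ≤ d x' y + assocE d x x' := by
  unfold assocE
  linarith [hd.triangle x x' y, hd.self_le_left x x']

lemma le_add_assocE_right (hd : IsPartialMetric d) (x y y' : X) :
    d x y ≤ d x y' + assocE d y y' := by
  rw [hd.symm x y, hd.symm x y']
  exact hd.le_add_assocE_left y y' x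

lemma self_le_of_tendsto (hd : IsPartialMetric d) {u v : ℕ → X} {z : X} {ρ : ℝ}
    (huv : Tendsto (fun n => d (u n) (v n)) atTop (𝓝 ρ))
    (hz : Tendsto (fun n => assocE d (u n) z) atTop (𝓝 0)) : d z z ≤ ρ := by
  refine ge_of_tendsto' (by simpa using huv.add hz) fun n => ?_
  linarith [hd.le_self_add_assocE (u n) z, hd.self_le_right (u n) z, hd.self_le_left (u n) (v n)]

end IsPartialMetric

/-- The `(M;b;φ)`-contractivity of `T`, where `b(x,y) = (d(x,x) + d(y,y)) / 2`. -/
def IsMContractive (d : X → X → ℝ) (φ : ℝ → ℝ) (T : X → X) : Prop :=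
  ∀ x y, d (T x) (T y) ≤ max (φ (Mfun d T x y)) ((d x x + d y y) / 2)

variable {T : X → X} {φ : ℝ → ℝ}

lemma le_Mfun (d : X → X → ℝ) (T : X → X) (x y : X) : d x y ≤ Mfun d T x y :=
  (le_max_left _ _).trans (le_max_left _ _)

lemma displacement_right_le_Mfun (d : X → X → ℝ) (T : X → X) (x y : X) :
    d y (T y) ≤ Mfun d T x y :=
  ((le_max_right _ _).trans (le_max_right _ _)).trans (le_max_left _ _)

lemma Mfun_le {x y : X} {c : ℝ} (hxy : d x y ≤ c) (hx : d x (T x) ≤ c) (hy : d y (T y) ≤ c)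
    (hcross : (d x (T y) + d (T x) y) / 2 ≤ c) : Mfun d T x y ≤ c :=
  max_le (max_le hxy (max_le hx hy)) hcross

namespace IsPartialMetric

lemma Mfun_le_add_assocE (hd : IsPartialMetric d) (T : X → X) (x y : X) :
    Mfun d T x y ≤ d x y + (assocE d x (T x) + assocE d y (T y)) := by
  have hx := hd.assocE_nonneg x (T x)
  have hy := hd.assocE_nonneg y (T y)
  refine Mfun_le (by linarith) ?_ ?_ ?_
  · linarith [hd.le_self_add_assocE x (T x), hd.self_le_left x y]
  · linarith [hd.le_self_add_assocE y (T y), hd.self_le_right x y]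
  · linarith [hd.le_add_assocE_right x (T y) y, hd.le_add_assocE_left (T x) x y,
      hd.assocE_comm x (T x), hd.assocE_comm y (T y)]

lemma Mfun_le_displacement_right_add_assocE (hd : IsPartialMetric d) (T : X → X) (x y : X) :
    Mfun d T x y ≤ d y (T y) + (assocE d x y + assocE d x (T x)) := by
  have hxy := hd.assocE_nonneg x y
  have hx := hd.assocE_nonneg x (T x)
  have hclose : d x y ≤ d y (T y) + assocE d x y := by
    linarith [hd.le_add_assocE_left x y y, hd.self_le_left y (T y)]
  refine Mfun_le (by linarith) ?_ (by linarith) ?_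
  · linarith [hd.le_self_add_assocE x (T x), hd.self_le_left x y]
  · linarith [hd.le_add_assocE_left x y (T y), hd.le_add_assocE_left (T x) x y,
      hd.assocE_comm x (T x)]

lemma Mfun_orbit (hd : IsPartialMetric d) (T : X → X) (x : X) :
    Mfun d T x (T x) = max (d x (T x)) (d (T x) (T (T x))) := by
  refine le_antisymm ?_ (max_le (le_Mfun d T _ _) (displacement_right_le_Mfun d T _ _))
  refine Mfun_le (le_max_left _ _) (le_max_left _ _) (le_max_right _ _) ?_
  linarith [hd.triangle x (T x) (T (T x)), le_max_left (d x (T x)) (d (T x) (T (T x))),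
    le_max_right (d x (T x)) (d (T x) (T (T x)))]

end IsPartialMetric

namespace IsMContractive

lemma displacement_map_le (hT : IsMContractive d φ T) (hd : IsPartialMetric d)
    (hφ : ∀ t, 0 < t → φ t < t) (x : X) : d (T x) (T (T x)) ≤ d x (T x) := by
  by_contra! hlt
  have hcontr := hT x (T x)
  rw [hd.Mfun_orbit, max_eq_right hlt.le] at hcontr
  rcases le_max_iff.1 hcontr with h | h
  · exact h.not_gt (hφ _ ((hd.nonneg _ _).trans_lt hlt))
  · linarith [hd.self_le_left x (T x), hd.self_le_right x (T x)]

lemma displacement_map_le_max (hT : IsMContractive d φ T) (hd : IsPartialMetric d)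
    (hφ : ∀ t, 0 < t → φ t < t) (x : X) :
    d (T x) (T (T x)) ≤ max (φ (d x (T x))) ((d x x + d (T x) (T x)) / 2) := by
  have hcontr := hT x (T x)
  rwa [hd.Mfun_orbit, max_eq_left (hT.displacement_map_le hd hφ x)] at hcontr

lemma exists_assocE_map_le (hT : IsMContractive d φ T) (hd : IsPartialMetric d)
    (hφ : HasUniformGap φ) {ρ : ℝ} (hρ : ∀ x, ρ ≤ d x (T x)) :
    ∃ δ > 0, ∀ x, d x (T x) < ρ + δ → assocE d x (T x) ≤ 2 * (d x (T x) - ρ) := by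
  suffices h : ∃ δ > 0, ∀ x, d x (T x) < ρ + δ → 2 * ρ ≤ d x x + d (T x) (T x) by
    obtain ⟨δ, hδ, h⟩ := h
    refine ⟨δ, hδ, fun x hx => ?_⟩
    unfold assocE
    linarith [h x hx]
  rcases le_or_gt ρ 0 with hρ0 | hρ0
  · exact ⟨1, one_pos, fun x _ => by linarith [hd.nonneg x x, hd.nonneg (T x) (T x)]⟩
  obtain ⟨δ, hδ, hgap⟩ := hφ ρ hρ0
  refine ⟨δ, hδ, fun x hx => ?_⟩
  have hφ_lt : φ (d x (T x)) < ρ := by linarith [hgap _ (hρ x)]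
  have hmap := hT.displacement_map_le_max hd (fun _ => hφ.lt_self) x
  rcases le_max_iff.1 ((hρ (T x)).trans hmap) with h | h
  · exact absurd h hφ_lt.not_ge
  · linarith

lemma le_self_average_add (hT : IsMContractive d φ T) {x y : X} {q κ δ : ℝ}
    (hgap : ∀ t, q ≤ t → δ ≤ t - φ t) (hκ : 2 * κ < δ) (hqM : q ≤ Mfun d T x y)
    (hMq : Mfun d T x y ≤ q + κ) (hq : q ≤ d (T x) (T y) + κ) :
    q ≤ (d x x + d y y) / 2 + κ := by
  rcases le_max_iff.1 (hT x y) with h | h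
  · linarith [hgap _ hqM]
  · linarith

lemma assocE_le_of_gap (hT : IsMContractive d φ T) (hd : IsPartialMetric d) {x y : X} {δ : ℝ}
    (hgap : ∀ t, d x y ≤ t → δ ≤ t - φ t)
    (hδ : 2 * (assocE d x (T x) + assocE d y (T y)) < δ) :
    assocE d x y ≤ 2 * (assocE d x (T x) + assocE d y (T y)) := by
  have hmap : d x y ≤ d (T x) (T y) + (assocE d x (T x) + assocE d y (T y)) := by
    linarith [hd.le_add_assocE_left x (T x) y, hd.le_add_assocE_right (T x) y (T y)]
  have havg := hT.le_self_average_add hgap hδ (le_Mfun d T x y) (hd.Mfun_le_add_assocE T x y) hmap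
  linarith [show assocE d x y = 2 * d x y - d x x - d y y from rfl]

lemma exists_assocE_lt (hT : IsMContractive d φ T) (hd : IsPartialMetric d)
    (hφ : HasUniformGap φ) {ε : ℝ} (hε : 0 < ε) :
    ∃ η > 0, ∀ x y, assocE d x (T x) < η → assocE d y (T y) < η → assocE d x y < ε := by
  obtain ⟨δ, hδ, hgap⟩ := hφ (ε / 2) (half_pos hε)
  refine ⟨min δ ε / 4, by positivity, fun x y hx hy => ?_⟩
  have hδ' := min_le_left δ ε
  have hε' := min_le_right δ ε
  rcases lt_or_ge (d x y) (ε / 2) with hlt | hge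
  · unfold assocE
    linarith [hd.nonneg x x, hd.nonneg y y]
  · linarith [hT.assocE_le_of_gap hd (fun t ht => hgap t (hge.trans ht)) (by linarith)]

lemma eq_of_map_eq_self (hT : IsMContractive d φ T) (hd : IsPartialMetric d)
    (hφ : HasUniformGap φ) {x y : X} (hx : T x = x) (hy : T y = y) : x = y := by
  refine hd.eq_of_assocE_nonpos (le_of_forall_pos_lt_add fun ε hε => ?_)
  obtain ⟨η, hη, h⟩ := hT.exists_assocE_lt hd hφ hε
  have hzero : ∀ z, assocE d z z = 0 := fun z => by unfold assocE; ring
  simpa using h x y (by rwa [hx, hzero]) (by rwa [hy, hzero])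

lemma exists_tendsto_of_tendsto_assocE_map (hT : IsMContractive d φ T) (hd : IsPartialMetric d)
    (hφ : HasUniformGap φ) (hcomp : eComplete d) {u : ℕ → X}
    (hu : Tendsto (fun n => assocE d (u n) (T (u n))) atTop (𝓝 0)) :
    ∃ z, Tendsto (fun n => assocE d (u n) z) atTop (𝓝 0) := by
  refine hcomp u fun ε hε => ?_
  obtain ⟨η, hη, hclose⟩ := hT.exists_assocE_lt hd hφ hε
  obtain ⟨p, hp⟩ := eventually_atTop.1 (hu.eventually_lt_const hη)
  exact ⟨p, fun m n hm hn => hclose _ _ (hp m hm) (hp n hn)⟩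

lemma displacement_le_self_of_tendsto (hT : IsMContractive d φ T) (hd : IsPartialMetric d)
    (hφ : HasUniformGap φ) {u : ℕ → X} {z : X}
    (hu : Tendsto (fun n => assocE d (u n) (T (u n))) atTop (𝓝 0))
    (hz : Tendsto (fun n => assocE d (u n) z) atTop (𝓝 0)) : d z (T z) ≤ d z z := by
  rcases (hd.nonneg z (T z)).eq_or_lt with h | hpos
  · exact h ▸ hd.nonneg z z
  obtain ⟨δ, hδ, hgap⟩ := hφ _ hpos
  have hκ : Tendsto (fun n => 2 * (assocE d (u n) z + assocE d (u n) (T (u n)))) atTop (𝓝 0) := by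
    simpa using (hz.add hu).const_mul 2
  refine ge_of_tendsto (by simpa using hκ.const_add (d z z)) ?_
  filter_upwards [hκ.eventually_lt_const hδ] with n hn
  have hmap : d z (T z) ≤ d (T (u n)) (T z) + (assocE d (u n) z + assocE d (u n) (T (u n))) := by
    linarith [hd.le_add_assocE_left z (u n) (T z), hd.le_add_assocE_left (u n) (T (u n)) (T z),
      hd.assocE_comm z (u n)]
  have havg := hT.le_self_average_add hgap hn (displacement_right_le_Mfun d T (u n) z)
    (hd.Mfun_le_displacement_right_add_assocE T (u n) z) hmap
  linarith [hd.self_le_left (u n) z, hd.le_add_assocE_left (u n) z z,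
    hd.assocE_nonneg (u n) z, hd.assocE_nonneg (u n) (T (u n))]

end IsMContractive

end PartialMetric

/-- an `(M;b;φ)`-contractive map on a complete space, with `φ` limit
normal and `t ↦ t - φ(t)` semi-coercive, has a unique fixed point. -/
theorem exists_unique_fixedPoint {X : Type*} [Nonempty X] (d : X → X → ℝ)
    (hd : IsPartialMetric d) (hcomp : eComplete d)
    (φ : ℝ → ℝ) (hφ : IsLimitNormal φ) (hψ : SemiCoercive (fun t => t - φ t))
    (T : X → X)
    (hT : ∀ x y : X, d (T x) (T y) ≤
      max (φ (Mfun d T x y)) ((d x x + d y y) / 2)) :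
    ∃! z : X, T z = z := by
  have hgap : HasUniformGap φ := hφ.hasUniformGap hψ
  have hcontr : IsMContractive d φ T := hT
  have hbdd : BddBelow (Set.range fun x => d x (T x)) :=
    ⟨0, Set.forall_mem_range.2 fun x => hd.nonneg x (T x)⟩
  obtain ⟨u, hu⟩ := exists_seq_tendsto_iInf hbdd
  set ρ := ⨅ x, d x (T x)
  obtain ⟨δ, hδ, hdefect⟩ := hcontr.exists_assocE_map_le hd hgap (ciInf_le hbdd)
  have hu_defect : Tendsto (fun n => assocE d (u n) (T (u n))) atTop (𝓝 0) :=
    squeeze_zero' (.of_forall fun n => hd.assocE_nonneg _ _)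
      ((hu.eventually_lt_const (lt_add_of_pos_right ρ hδ)).mono fun n hn => hdefect (u n) hn)
      (by simpa using (hu.sub_const ρ).const_mul 2)
  obtain ⟨z, hz⟩ := hcontr.exists_tendsto_of_tendsto_assocE_map hd hgap hcomp hu_defect
  have hz_min : d z (T z) ≤ ρ :=
    (hcontr.displacement_le_self_of_tendsto hd hgap hu_defect hz).trans
      (hd.self_le_of_tendsto hu hz)
  have hz_fixed : T z = z :=
    (hd.eq_of_assocE_nonpos ((hdefect z (by linarith)).trans (by linarith))).symm
  exact ⟨z, hz_fixed, fun w hw => hcontr.eq_of_map_eq_self hd hgap hw hz_fixed⟩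
end
end
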